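/- arXiv:1108.0810 — 12 statements merged into one kernel-verified Lean document; each statement's English description precedes it below -/
import Mathlib

section
/- Let (V, ≤) be a finite partially ordered set with n = |V| elements, and let 𝓜 be a collection of pairwise disjoint two-element subsets {u, v} of V such that u < v (i.e., a matching in the comparability graph of (V, ≤)). Then the number of downward closed subsets of V is at most 2^(n − 2|𝓜|) · 3^(|𝓜|). -/
/-- Let `(V, ≤)` be a finite poset with `n = |V|` elements and `𝓜` a
collection of pairwise disjoint two-element subsets `{u, v}` of `V` with `u < v`
(a matching in the comparability graph). Then the number of downward closed subsets
of `V` is at most `2^(n − 2|𝓜|) · 3^(|𝓜|)`. -/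
theorem num_downward_closed_le {V : Type*} [Fintype V] [PartialOrder V] [DecidableEq V]
    (n : ℕ) (hn : n = Fintype.card V)
    (𝓜 : Finset (Finset V))
    (hedge : ∀ e ∈ 𝓜, ∃ u v : V, u < v ∧ e = {u, v})
    (hdisj : (𝓜 : Set (Finset V)).Pairwise (fun e f => Disjoint e f)) :
    {X : Set V | ∀ v ∈ X, ∀ u : V, u < v → u ∈ X}.ncard ≤
      2 ^ (n - 2 * 𝓜.card) * 3 ^ 𝓜.card := by
  classical
  subst hn
  have hcard2 : ∀ e ∈ 𝓜, e.card = 2 := by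
    intro e he
    obtain ⟨u, v, huv, rfl⟩ := hedge e he
    exact Finset.card_pair huv.ne
  have hU : (𝓜.biUnion id).card = 2 * 𝓜.card := by
    rw [Finset.card_biUnion (t := id) (fun e he f hf hne => hdisj he hf hne)]
    refine (Finset.sum_congr (g := fun _ => 2) rfl (fun e he => hcard2 e he)).trans ?_
    simp [mul_comm]
  let G : Finset V → Finset (Finset V) := fun e =>
    e.powerset.filter (fun Y => ∀ v ∈ Y, ∀ u ∈ e, u < v → u ∈ Y)
  have hG : ∀ e ∈ 𝓜, (G e).card ≤ 3 := by
    intro e he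
    obtain ⟨u, v, huv, rfl⟩ := hedge e he
    have h1 : G {u, v} ⊆ ({u, v} : Finset V).powerset.erase {v} := by
      intro Y hY
      simp only [G, Finset.mem_filter] at hY
      refine Finset.mem_erase.2 ⟨?_, hY.1⟩
      rintro rfl
      have := hY.2 v (by simp) u (by simp) huv
      exact huv.ne (by simpa using this)
    refine (Finset.card_le_card h1).trans ?_
    rw [Finset.card_erase_of_mem (by simp), Finset.card_powerset, Finset.card_pair huv.ne]
    norm_num
  let T : Finset (Finset V × ((e : Finset V) → e ∈ 𝓜 → Finset V)) :=
    (Finset.univ \ 𝓜.biUnion id).powerset ×ˢ 𝓜.pi G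
  have hT : T.card ≤ 2 ^ (Fintype.card V - 2 * 𝓜.card) * 3 ^ 𝓜.card := by
    rw [Finset.card_product, Finset.card_powerset, Finset.card_pi,
      Finset.card_sdiff_of_subset (Finset.subset_univ _), hU, Finset.card_univ]
    exact Nat.mul_le_mul_left _ (Finset.prod_le_pow_card _ _ _ hG)
  refine le_trans ?_ hT
  rw [← Set.ncard_coe_finset T]
  refine Set.ncard_le_ncard_of_injOn
    (fun X => (X.toFinset \ 𝓜.biUnion id, fun e _ => X.toFinset ∩ e)) ?_ ?_ (Finset.finite_toSet T)
  · intro X hX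
    simp only [T, Finset.coe_product, Set.mem_prod, Finset.mem_coe, Finset.mem_powerset,
      Finset.mem_pi, G, Finset.mem_filter]
    refine ⟨Finset.sdiff_subset_sdiff (Finset.subset_univ _) le_rfl, fun e he => 
      ⟨Finset.inter_subset_right, ?_⟩⟩
    intro v hv u hu huv
    simp only [Finset.mem_inter, Set.mem_toFinset] at hv ⊢
    exact ⟨hX v hv.1 u huv, hu⟩
  · intro X _ Y _ h
    simp only [Prod.mk.injEq] at h
    obtain ⟨h1, h2⟩ := h
    ext x
    by_cases hx : x ∈ 𝓜.biUnion id
    · obtain ⟨e, he, hxe⟩ := Finset.mem_biUnion.1 hx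
      have := congrFun (congrFun h2 e) he
      have := Finset.ext_iff.1 this x
      simp only [id] at hxe
      simpa [hxe] using this
    · have := Finset.ext_iff.1 h1 x
      simp only [Finset.mem_sdiff, hx, not_false_eq_true, and_true, Set.mem_toFinset] at this
      exact this
end

section
/- Let (V, ≤) be a finite partially ordered set with n = |V| jobs, let t : V → ℝ be an injective (pairwise distinct) nonnegative processing-time function, and let σ_opt be an ordering minimizing the total completion time T among all orderings. Let K ⊆ V be an antichain (no two distinct elements of K are comparable) such that every u ∈ K has succ(u) ≠ ∅, and assume that for all v ∈ K and all x ∈ pred(K) we have σ_opt(v) > σ_opt(x). Then for every i with 1 ≤ i ≤ n, the set K ∩ σ_opt⁻¹({1, …, i}) is non-succ-exchangeable with respect to K. -/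
/-- The set of predecessors of a job: `pred(v) = {x : x < v}`. -/
def predSet {V : Type*} [PartialOrder V] (v : V) : Set V := {x | x < v}

/-- The set of successors of a job: `succ(v) = {x : v < x}`. -/
def succSet {V : Type*} [PartialOrder V] (v : V) : Set V := {x | v < x}

/-- `pred(U) = ⋃_{v ∈ U} pred(v)`. -/
def predSets {V : Type*} [PartialOrder V] (U : Set V) : Set V := ⋃ v ∈ U, predSet v

/-- `L ⊆ K` is succ-exchangeable with respect to `K` if there exists `u ∈ L` such that
for every `w ∈ succ(u)` there is `v_w ∈ (K ∩ pred(w)) \ L` with `t(v_w) < t(u)`. -/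
def SuccExchangeable {V : Type*} [PartialOrder V] (t : V → ℝ) (K L : Set V) : Prop :=
  ∃ u ∈ L, ∀ w ∈ succSet u, ∃ vw ∈ (K ∩ predSet w) \ L, t vw < t u

/-- Total completion time `T(σ) = Σ_{v ∈ V} (n − σ(v) + 1) · t(v)`, where the bijection
`σ : V ≃ Fin n` gives job `v` the (1-indexed) position `(σ v : ℕ) + 1`. -/
noncomputable def TotalCost {V : Type*} [Fintype V] (n : ℕ) (t : V → ℝ)
    (σ : V ≃ Fin n) : ℝ :=
  ∑ v : V, ((n : ℝ) - ((σ v : ℕ) : ℝ)) * t v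

/-- With `σ_opt` an optimal ordering of a SCHED instance with pairwise distinct
nonnegative processing times, `K` an antichain whose every element has a successor, and all
predecessors of `K` scheduled before all of `K`, each prefix intersection
`K ∩ σ_opt⁻¹({1, …, i})` is non-succ-exchangeable with respect to `K`. -/
theorem prefix_non_succ_exchangeable {V : Type*} [Fintype V] [PartialOrder V]
    (n : ℕ) (hn : n = Fintype.card V)
    (t : V → ℝ) (ht : Function.Injective t) (ht0 : ∀ v, 0 ≤ t v)
    (σopt : V ≃ Fin n)
    (hord : ∀ u v : V, u < v → σopt u < σopt v)
    (hopt : ∀ σ : V ≃ Fin n, (∀ u v : V, u < v → σ u < σ v) →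
      TotalCost n t σopt ≤ TotalCost n t σ)
    (K : Set V) (hK : IsAntichain (· ≤ ·) K)
    (hsucc : ∀ u ∈ K, (succSet u).Nonempty)
    (hpred : ∀ v ∈ K, ∀ x ∈ predSets K, (σopt x : ℕ) < (σopt v : ℕ))
    (i : ℕ) (hi1 : 1 ≤ i) (hin : i ≤ n) :
    ¬ SuccExchangeable t K (K ∩ {v : V | (σopt v : ℕ) + 1 ≤ i}) := by
  classical
  rintro ⟨u, ⟨huK, hui⟩, hu⟩
  obtain ⟨w, hw, hmin⟩ := Set.exists_min_image (succSet u) (fun x => σopt x)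
    (Set.toFinite _) (hsucc u huK)
  obtain ⟨v, ⟨⟨hvK, hvw⟩, hvL⟩, htv⟩ := hu w hw
  have hvi : ¬ ((σopt v : ℕ) + 1 ≤ i) := fun h => hvL ⟨hvK, h⟩
  have hui' : (σopt u : ℕ) + 1 ≤ i := hui
  have huv : (σopt u : ℕ) < (σopt v : ℕ) := by omega
  have hne : u ≠ v := by
    rintro rfl
    exact lt_irrefl _ huv
  have hvw' : σopt v < σopt w := hord v w hvw
  have hpos : ∀ x y, x < y →
      ((Equiv.swap u v).trans σopt) x < ((Equiv.swap u v).trans σopt) y := by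
    intro x y hxy
    have hxy' := hord x y hxy
    have huv' : σopt u < σopt v := huv
    simp only [Equiv.trans_apply]
    by_cases hxu : x = u
    · subst hxu
      have hyx : y ≠ x := hxy.ne'
      have hyv : y ≠ v := by
        rintro rfl
        exact hK huK hvK hne hxy.le
      rw [Equiv.swap_apply_left, Equiv.swap_apply_of_ne_of_ne hyx hyv]
      exact hvw'.trans_le (hmin y hxy)
    · by_cases hxv : x = v
      · subst hxv
        have hyx : y ≠ x := hxy.ne'
        have hyu : y ≠ u := by
          rintro rfl
          exact hK hvK huK hne.symm hxy.le
        rw [Equiv.swap_apply_right, Equiv.swap_apply_of_ne_of_ne hyu hyx]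
        exact huv'.trans hxy'
      · rw [Equiv.swap_apply_of_ne_of_ne hxu hxv]
        by_cases hyu : y = u
        · subst hyu
          rw [Equiv.swap_apply_left]
          exact hxy'.trans huv'
        · by_cases hyv : y = v
          · subst hyv
            rw [Equiv.swap_apply_right]
            exact hpred u huK x (Set.mem_biUnion hvK hxy)
          · rw [Equiv.swap_apply_of_ne_of_ne hyu hyv]
            exact hxy'
  have hle := hopt _ hpos
  have hd : TotalCost n t ((Equiv.swap u v).trans σopt) - TotalCost n t σopt
      = ((σopt u : ℕ) - (σopt v : ℕ) : ℝ) * t u + ((σopt v : ℕ) - (σopt u : ℕ) : ℝ) * t v := by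
    unfold TotalCost
    rw [← Finset.sum_sub_distrib, Fintype.sum_eq_add u v hne]
    · simp only [Equiv.trans_apply, Equiv.swap_apply_left, Equiv.swap_apply_right]
      ring
    · rintro x ⟨hxu, hxv⟩
      simp only [Equiv.trans_apply, Equiv.swap_apply_of_ne_of_ne hxu hxv, sub_self]
  have huvR : ((σopt u : ℕ) : ℝ) < ((σopt v : ℕ) : ℝ) := by exact_mod_cast huv
  nlinarith [mul_pos (sub_pos.2 huvR) (sub_pos.2 htv)]
end

section
/- Let (V, ≤) be a finite partially ordered set with n = |V| jobs, let t : V → ℝ be an injective (pairwise distinct) nonnegative processing-time function, and let σ_opt be an ordering minimizing the total completion time T among all orderings. Let K ⊆ V be an antichain (no two distinct elements of K are comparable) such that every v ∈ K has pred(v) ≠ ∅, and assume that for all v ∈ K and all x ∈ succ(K) we have σ_opt(v) < σ_opt(x). Then for every i with 1 ≤ i ≤ n, the set K ∩ σ_opt⁻¹({1, …, i}) is non-pred-exchangeable with respect to K. -/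
/-- `succ(U) = ⋃_{v ∈ U} succ(v)`. -/
def succSets {V : Type*} [PartialOrder V] (U : Set V) : Set V := ⋃ v ∈ U, succSet v

/-- `L ⊆ K` is pred-exchangeable with respect to `K` if there exists `v ∈ K \ L` such that
for every `w ∈ pred(v)` there is `u_w ∈ L ∩ succ(w)` with `t(u_w) > t(v)`. -/
def PredExchangeable {V : Type*} [PartialOrder V] (t : V → ℝ) (K L : Set V) : Prop :=
  ∃ v ∈ K \ L, ∀ w ∈ predSet v, ∃ uw ∈ L ∩ succSet w, t uw > t v

/-- With `σ_opt` an optimal ordering of a SCHED instance with pairwise distinct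
nonnegative processing times, `K` an antichain whose every element has a predecessor, and all
successors of `K` scheduled after all of `K`, each prefix intersection
`K ∩ σ_opt⁻¹({1, …, i})` is non-pred-exchangeable with respect to `K`. -/
theorem prefix_non_pred_exchangeable {V : Type*} [Fintype V] [PartialOrder V]
    (n : ℕ) (hn : n = Fintype.card V)
    (t : V → ℝ) (ht : Function.Injective t) (ht0 : ∀ v, 0 ≤ t v)
    (σopt : V ≃ Fin n)
    (hord : ∀ u v : V, u < v → σopt u < σopt v)
    (hopt : ∀ σ : V ≃ Fin n, (∀ u v : V, u < v → σ u < σ v) →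
      TotalCost n t σopt ≤ TotalCost n t σ)
    (K : Set V) (hK : IsAntichain (· ≤ ·) K)
    (hpredne : ∀ v ∈ K, (predSet v).Nonempty)
    (hsucc : ∀ v ∈ K, ∀ x ∈ succSets K, (σopt v : ℕ) < (σopt x : ℕ))
    (i : ℕ) (hi1 : 1 ≤ i) (hin : i ≤ n) :
    ¬ PredExchangeable t K (K ∩ {v : V | (σopt v : ℕ) + 1 ≤ i}) := by
  classical
  rintro ⟨v, ⟨hvK, hvL⟩, hex⟩
  have hvi : i ≤ (σopt v : ℕ) := by
    by_contra h
    exact hvL ⟨hvK, by simp only [Set.mem_setOf_eq]; omega⟩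
  obtain ⟨w, hw, hmax⟩ := Set.exists_max_image (predSet v) σopt (Set.toFinite _) (hpredne v hvK)
  obtain ⟨u, ⟨⟨huK, hui⟩, hwu⟩, htu⟩ := hex w hw
  simp only [Set.mem_setOf_eq] at hui
  have hwu' : σopt w < σopt u := hord _ _ hwu
  have huv : σopt u < σopt v := by
    rw [Fin.lt_def]; omega
  have hne : u ≠ v := by
    rintro rfl
    exact lt_irrefl _ huv
  have hpv : ∀ x, x < v → σopt x < σopt u := fun x hx => lt_of_le_of_lt (hmax x hx) hwu'
  have hsu : ∀ x, u < x → σopt v < σopt x := fun x hx =>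
    hsucc v hvK x (Set.mem_biUnion huK hx)
  have hfeas : ∀ a b : V, a < b →
      ((Equiv.swap u v).trans σopt) a < ((Equiv.swap u v).trans σopt) b := by
    intro a b hab
    have h0 := hord a b hab
    simp only [Equiv.trans_apply]
    by_cases hau : a = u
    · subst hau
      have h1 := hsu b hab
      have hb1 : b ≠ a := hab.ne'
      have hb2 : b ≠ v := by rintro rfl; exact lt_irrefl _ h1
      rw [Equiv.swap_apply_left, Equiv.swap_apply_of_ne_of_ne hb1 hb2]
      exact h1
    · by_cases hav : a = v
      · subst hav
        have hb1 : b ≠ u := by rintro rfl; exact lt_asymm h0 huv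
        rw [Equiv.swap_apply_right, Equiv.swap_apply_of_ne_of_ne hb1 hab.ne']
        exact huv.trans h0
      · rw [Equiv.swap_apply_of_ne_of_ne hau hav]
        by_cases hbu : b = u
        · subst hbu
          rw [Equiv.swap_apply_left]
          exact h0.trans huv
        · by_cases hbv : b = v
          · subst hbv
            rw [Equiv.swap_apply_right]
            exact hpv a hab
          · rw [Equiv.swap_apply_of_ne_of_ne hbu hbv]
            exact h0
  have hle := hopt _ hfeas
  rw [← sub_nonneg] at hle
  unfold TotalCost at hle
  rw [← Finset.sum_sub_distrib] at hle
  rw [← Finset.sum_subset (Finset.subset_univ ({u, v} : Finset V)), Finset.sum_pair hne] at hle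
  · simp only [Equiv.trans_apply, Equiv.swap_apply_left, Equiv.swap_apply_right] at hle
    have hc : ((σopt u : ℕ) : ℝ) < ((σopt v : ℕ) : ℝ) := by exact_mod_cast huv
    nlinarith [mul_pos (sub_pos.2 hc) (sub_pos.2 htu)]
  · intro x _ hx
    simp only [Finset.mem_insert, Finset.mem_singleton, not_or] at hx
    simp only [Equiv.trans_apply, Equiv.swap_apply_of_ne_of_ne hx.1 hx.2, sub_self]
end

section
/- Let (V, ≤) be a finite partially ordered set, t : V → ℝ injective, M ⊆ V, and K ⊆ V with succ(K) ⊆ M. Then the number of subsets L ⊆ K that are non-succ-exchangeable with respect to K is at most Σ_{l=0}^{|M|} C(|K|, l). -/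
/-- Reconstruction of `L` from the set of first missing elements. -/
def recon {V : Type*} [PartialOrder V] (t : V → ℝ) (K D : Set V) : Set V :=
  {u | u ∈ K ∧ ∃ w ∈ succSet u, ∀ v ∈ D, v < w → t u < t v}

theorem exists_recon {V : Type*} [Fintype V] [PartialOrder V]
    (t : V → ℝ) (ht : Function.Injective t) (M K : Set V) (hKM : succSets K ⊆ M) (L : Set V) (hL : L ⊆ K)
    (hne : ¬ SuccExchangeable t K L) :
    ∃ D : Set V, D ⊆ K ∧ D.ncard ≤ M.ncard ∧ recon t K D = L := by
  classical
  have hmin : ∀ w : V, ∃ f : V, ((K ∩ predSet w) \ L).Nonempty →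
      f ∈ (K ∩ predSet w) \ L ∧ ∀ v ∈ (K ∩ predSet w) \ L, t f ≤ t v := by
    intro w
    by_cases h : ((K ∩ predSet w) \ L).Nonempty
    · obtain ⟨f, hf, hf2⟩ := Set.exists_min_image _ t (Set.toFinite _) h
      exact ⟨f, fun _ => ⟨hf, hf2⟩⟩
    · exact ⟨w, fun h' => absurd h' h⟩
  choose f hf using hmin
  refine ⟨f '' {w | w ∈ M ∧ ((K ∩ predSet w) \ L).Nonempty}, ?_, ?_, ?_⟩
  · rintro _ ⟨w, ⟨_, hw⟩, rfl⟩
    exact (hf w hw).1.1.1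
  · exact (Set.ncard_image_le (Set.toFinite _)).trans
      (Set.ncard_le_ncard (fun w hw => hw.1) (Set.toFinite _))
  · ext u
    constructor
    · rintro ⟨huK, w, hw, h⟩
      by_contra huL
      have hn : u ∈ (K ∩ predSet w) \ L := ⟨⟨huK, hw⟩, huL⟩
      have hwM : w ∈ M := hKM (Set.mem_biUnion huK hw)
      have h1 := hf w ⟨u, hn⟩
      have h2 := h (f w) ⟨w, ⟨hwM, ⟨u, hn⟩⟩, rfl⟩ h1.1.1.2
      exact absurd (h1.2 u hn) (not_le.mpr h2)
    · intro hu
      refine ⟨hL hu, ?_⟩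
      unfold SuccExchangeable at hne
      push Not at hne
      obtain ⟨w, hw, h⟩ := hne u hu
      refine ⟨w, hw, ?_⟩
      rintro _ ⟨w', ⟨_, hw'⟩, rfl⟩ hlt
      have h1 := (hf w' hw').1
      have h2 := h (f w') ⟨⟨h1.1.1, hlt⟩, h1.2⟩
      refine lt_of_le_of_ne h2 fun he => ?_
      exact h1.2 (ht he ▸ hu)

/-- For `K ⊆ V` with `succ(K) ⊆ M` and injective processing times, the number
of subsets `L ⊆ K` that are non-succ-exchangeable with respect to `K` is at most
`Σ_{l=0}^{|M|} C(|K|, l)`. -/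
theorem count_non_succ_exchangeable {V : Type*} [Fintype V] [PartialOrder V]
    (t : V → ℝ) (ht : Function.Injective t)
    (M K : Set V) (hKM : succSets K ⊆ M) :
    {L : Set V | L ⊆ K ∧ ¬ SuccExchangeable t K L}.ncard ≤
      ∑ l ∈ Finset.range (M.ncard + 1), (K.ncard).choose l := by
  classical
  have hfin : Fintype K := Fintype.ofFinite K
  let B : Finset (Finset V) :=
    (Finset.range (M.ncard + 1)).biUnion fun l => K.toFinset.powersetCard l
  have hsub : {L : Set V | L ⊆ K ∧ ¬ SuccExchangeable t K L} ⊆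
      (fun D : Finset V => recon t K (D : Set V)) '' (B : Set (Finset V)) := by
    rintro L ⟨hL, hne⟩
    obtain ⟨D, hD, hc, hr⟩ := exists_recon t ht M K hKM L hL hne
    refine ⟨D.toFinite.toFinset, ?_, by simpa using hr⟩
    simp only [B, Finset.coe_biUnion, Set.mem_iUnion, Finset.mem_coe, Finset.mem_powersetCard]
    refine ⟨D.ncard, by simp; omega, ?_, (Set.ncard_eq_toFinset_card D).symm⟩
    intro x hx
    simpa using hD (by simpa using hx)
  refine (Set.ncard_le_ncard hsub (Set.toFinite _)).trans ?_
  refine (Set.ncard_image_le (Set.toFinite _)).trans ?_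
  rw [Set.ncard_coe_finset]
  refine Finset.card_biUnion_le.trans ?_
  simp only [Finset.card_powersetCard, Set.ncard_eq_toFinset_card' K, le_refl]
end

section
/- Let (V, ≤) be a finite partially ordered set, t : V → ℝ injective, M ⊆ V, and K ⊆ V with pred(K) ⊆ M. Then the number of subsets L ⊆ K that are non-pred-exchangeable with respect to K is at most Σ_{l=0}^{|M|} C(|K|, l). -/
/-- The elements of `L` that are longest among the successors in `L` of some `w ∈ M`. -/
def topSet {V : Type*} [PartialOrder V] (t : V → ℝ) (M L : Set V) : Set V :=
  {a | a ∈ L ∧ ∃ w ∈ M, w < a ∧ ∀ u ∈ L, w < u → t u ≤ t a}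

theorem topSet_ncard {V : Type*} [Fintype V] [PartialOrder V]
    (t : V → ℝ) (ht : Function.Injective t) (M L : Set V) :
    (topSet t M L).ncard ≤ M.ncard := by
  have h : ∀ a : V, ∃ w, a ∈ topSet t M L → w ∈ M ∧ w < a ∧ ∀ u ∈ L, w < u → t u ≤ t a := by
    intro a
    by_cases ha : a ∈ topSet t M L
    · obtain ⟨_, w, h1, h2⟩ := ha
      exact ⟨w, fun _ => ⟨h1, h2⟩⟩
    · exact ⟨a, fun h => absurd h ha⟩
  choose f hf using h
  refine Set.ncard_le_ncard_of_injOn f (fun a ha => (hf a ha).1) ?_ (Set.toFinite _)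
  intro a ha b hb hab
  apply ht
  apply le_antisymm
  · exact (hf b hb).2.2 a ha.1 (hab ▸ (hf a ha).2.1)
  · exact (hf a ha).2.2 b hb.1 (hab ▸ (hf b hb).2.1)

theorem mem_iff_topSet {V : Type*} [Fintype V] [PartialOrder V]
    (t : V → ℝ) (ht : Function.Injective t)
    (M K L : Set V) (hKM : predSets K ⊆ M) (hL : L ⊆ K) (hne : ¬ PredExchangeable t K L) (v : V) :
    v ∈ L ↔ v ∈ K ∧ (v ∈ topSet t M L ∨ ∀ w, w < v → ∃ u ∈ topSet t M L, w < u ∧ t v < t u) := by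
  constructor
  · intro hv
    refine ⟨hL hv, ?_⟩
    by_cases hA : v ∈ topSet t M L
    · exact Or.inl hA
    right
    intro w hw
    have hwM : w ∈ M := hKM (Set.mem_biUnion (hL hv) hw)
    obtain ⟨a, ha, hmax⟩ := Set.exists_max_image {u | u ∈ L ∧ w < u} t (Set.toFinite _) ⟨v, hv, hw⟩
    have haT : a ∈ topSet t M L := ⟨ha.1, w, hwM, ha.2, fun u hu hwu => hmax u ⟨hu, hwu⟩⟩
    refine ⟨a, haT, ha.2, lt_of_le_of_ne (hmax v ⟨hv, hw⟩) ?_⟩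
    intro h
    exact hA (ht h ▸ haT)
  · rintro ⟨hK, h | h⟩
    · exact h.1
    · by_contra hv
      refine hne ⟨v, ⟨hK, hv⟩, fun w hw => ?_⟩
      obtain ⟨u, hu, h1, h2⟩ := h w hw
      exact ⟨u, ⟨hu.1, h1⟩, h2⟩

theorem ncard_small_subsets {V : Type*} [Fintype V] (K : Set V) (m : ℕ) :
    {A : Set V | A ⊆ K ∧ A.ncard ≤ m}.ncard ≤ ∑ l ∈ Finset.range (m + 1), (K.ncard).choose l := by
  classical
  have h : {A : Set V | A ⊆ K ∧ A.ncard ≤ m} ⊆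
      ((((Finset.range (m + 1)).biUnion fun l => K.toFinset.powersetCard l).image
        (fun s : Finset V => (s : Set V)) : Finset (Set V)) : Set (Set V)) := by
    rintro A ⟨h1, h2⟩
    simp only [Finset.coe_image, Set.mem_image, Finset.mem_coe, Finset.mem_biUnion,
      Finset.mem_range, Finset.mem_powersetCard]
    refine ⟨A.toFinset, ⟨A.ncard, by omega, by simpa using h1, ?_⟩, by simp⟩
    rw [Set.ncard_eq_toFinset_card']
  refine (Set.ncard_le_ncard h (Set.toFinite _)).trans ?_
  rw [Set.ncard_coe_finset]
  refine Finset.card_image_le.trans (Finset.card_biUnion_le.trans (le_of_eq ?_))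
  refine Finset.sum_congr rfl fun l _ => ?_
  rw [Finset.card_powersetCard, Set.ncard_eq_toFinset_card']


/-- For `K ⊆ V` with `pred(K) ⊆ M` and injective processing times, the number
of subsets `L ⊆ K` that are non-pred-exchangeable with respect to `K` is at most
`Σ_{l=0}^{|M|} C(|K|, l)`. -/
theorem count_non_pred_exchangeable {V : Type*} [Fintype V] [PartialOrder V]
    (t : V → ℝ) (ht : Function.Injective t)
    (M K : Set V) (hKM : predSets K ⊆ M) :
    {L : Set V | L ⊆ K ∧ ¬ PredExchangeable t K L}.ncard ≤
      ∑ l ∈ Finset.range (M.ncard + 1), (K.ncard).choose l := by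
  refine le_trans ?_ (ncard_small_subsets K M.ncard)
  refine Set.ncard_le_ncard_of_injOn (topSet t M) ?_ ?_ (Set.toFinite _)
  · rintro L ⟨hL, -⟩
    exact ⟨fun a ha => hL ha.1, topSet_ncard t ht M L⟩
  · rintro L ⟨hL, hne⟩ L' ⟨hL', hne'⟩ heq
    ext v
    rw [mem_iff_topSet t ht M K L hKM hL hne, mem_iff_topSet t ht M K L' hKM hL' hne', heq]
end

section
/- Let (V, ≤) be a finite partially ordered set, t : V → ℝ injective, M ⊆ V, and K ⊆ V with succ(K) ⊆ M. With f and g the succ-encoding and succ-decoding maps defined below, for every subset Y ⊆ K we have g(f(Y)) ⊆ Y. -/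
/-- The succ-encoding map: `f(Y)` is the set of "least expensive predecessors outside `Y`",
i.e. all `v` that, for some `w ∈ M`, are the element of `(K \ Y) ∩ pred(w)` with smallest
processing time (the value `nil`, taken when this set is empty, contributes no element). -/
def succEncode {V : Type*} [PartialOrder V] (t : V → ℝ) (M K Y : Set V) : Set V :=
  {v | ∃ w ∈ M, v ∈ (K \ Y) ∩ predSet w ∧ ∀ z ∈ (K \ Y) ∩ predSet w, t v ≤ t z}

/-- The succ-decoding map: `g(Z)` is the set of `v ∈ K` for which there is `w ∈ succ(v)`
such that every `z ∈ Z ∩ pred(w)` satisfies `t(z) > t(v)`. -/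
def succDecode {V : Type*} [PartialOrder V] (t : V → ℝ) (K Z : Set V) : Set V :=
  {v | v ∈ K ∧ ∃ w ∈ succSet v, ∀ z ∈ Z ∩ predSet w, t v < t z}

/-- For `K ⊆ V` with `succ(K) ⊆ M` and injective processing times,
every `Y ⊆ K` satisfies `g(f(Y)) ⊆ Y`. -/
theorem succDecode_succEncode_subset {V : Type*} [Fintype V] [PartialOrder V]
    (t : V → ℝ) (ht : Function.Injective t)
    (M K : Set V) (hKM : succSets K ⊆ M)
    (Y : Set V) (hY : Y ⊆ K) :
    succDecode t K (succEncode t M K Y) ⊆ Y := by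
  rintro v ⟨hvK, w, hvw, hw⟩
  by_contra hvY
  obtain ⟨z, hz, hmin⟩ := Set.exists_min_image ((K \ Y) ∩ predSet w) t (Set.toFinite _)
    ⟨v, ⟨hvK, hvY⟩, hvw⟩
  have hwM : w ∈ M := hKM (Set.mem_biUnion hvK hvw)
  exact absurd (hw z ⟨⟨w, hwM, hz, hmin⟩, hz.2⟩) (not_lt.mpr (hmin v ⟨⟨hvK, hvY⟩, hvw⟩))
end

section
/- Let (V, ≤) be a finite partially ordered set, t : V → ℝ injective, M ⊆ V, and K ⊆ V with succ(K) ⊆ M. With f and g the succ-encoding and succ-decoding maps defined below, if a subset Y ⊆ K does not satisfy Y ⊆ g(f(Y)), then Y is succ-exchangeable with respect to K. Consequently, every non-succ-exchangeable subset Y ⊆ K satisfies g(f(Y)) = Y. -/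
/-- For `K ⊆ V` with `succ(K) ⊆ M` and injective processing times:
if `Y ⊆ K` does not satisfy `Y ⊆ g(f(Y))`, then `Y` is succ-exchangeable with respect
to `K`; consequently every non-succ-exchangeable `Y ⊆ K` satisfies `g(f(Y)) = Y`. -/
theorem succEncode_decode_fixed_point {V : Type*} [Fintype V] [PartialOrder V]
    (t : V → ℝ) (ht : Function.Injective t)
    (M K : Set V) (hKM : succSets K ⊆ M)
    (Y : Set V) (hY : Y ⊆ K) :
    (¬ Y ⊆ succDecode t K (succEncode t M K Y) → SuccExchangeable t K Y)
    ∧ (¬ SuccExchangeable t K Y → succDecode t K (succEncode t M K Y) = Y) := by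
  have h1 : ¬ Y ⊆ succDecode t K (succEncode t M K Y) → SuccExchangeable t K Y := by
    intro h
    obtain ⟨u, huY, hu⟩ := Set.not_subset.mp h
    refine ⟨u, huY, fun w hw => ?_⟩
    by_contra hcon
    apply hu
    refine ⟨hY huY, w, hw, ?_⟩
    rintro z ⟨⟨w', _, ⟨⟨hzK, hzY⟩, _⟩, _⟩, hzw⟩
    by_contra hlt
    have hne : t z ≠ t u := fun he => hzY (ht he ▸ huY)
    exact hcon ⟨z, ⟨⟨hzK, hzw⟩, hzY⟩, lt_of_le_of_ne (not_lt.mp hlt) hne⟩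
  refine ⟨h1, fun hne => Set.Subset.antisymm ?_ (by_contra fun h => hne (h1 h))⟩
  rintro v ⟨hvK, w, hw, hall⟩
  by_contra hvY
  have hwM : w ∈ M := hKM (Set.mem_biUnion hvK hw)
  have hv : v ∈ (K \ Y) ∩ predSet w := ⟨⟨hvK, hvY⟩, hw⟩
  obtain ⟨z, hz, hmin⟩ :=
    Set.exists_min_image ((K \ Y) ∩ predSet w) t (Set.toFinite _) ⟨v, hv⟩
  exact absurd (hall z ⟨⟨w, hwM, hz, hmin⟩, hz.2⟩) (not_lt.mpr (hmin v hv))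
end

section
/- Let (V, ≤) be a finite partially ordered set, t : V → ℝ injective, M ⊆ V, and K ⊆ V with pred(K) ⊆ M. With f and g the pred-encoding and pred-decoding maps defined below, for every subset Y ⊆ K we have Y ⊆ g(f(Y)). -/
/-- The pred-encoding map: `f(Y)` is the set of "most expensive successors in `Y`",
i.e. all `v` that, for some `w ∈ M`, are the element of `Y ∩ succ(w)` with largest
processing time (the value `nil`, taken when this set is empty, contributes no element). -/
def predEncode {V : Type*} [PartialOrder V] (t : V → ℝ) (M Y : Set V) : Set V :=
  {v | ∃ w ∈ M, v ∈ Y ∩ succSet w ∧ ∀ z ∈ Y ∩ succSet w, t z ≤ t v}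

/-- The pred-decoding map: `g(Z)` is the set of `v ∈ K` such that for every `w ∈ pred(v)`
there exists `z ∈ Z ∩ succ(w)` with `t(z) ≥ t(v)`. -/
def predDecode {V : Type*} [PartialOrder V] (t : V → ℝ) (K Z : Set V) : Set V :=
  {v | v ∈ K ∧ ∀ w ∈ predSet v, ∃ z ∈ Z ∩ succSet w, t v ≤ t z}

/-- For `K ⊆ V` with `pred(K) ⊆ M` and injective processing times,
every `Y ⊆ K` satisfies `Y ⊆ g(f(Y))`. -/
theorem subset_predDecode_predEncode {V : Type*} [Fintype V] [PartialOrder V]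
    (t : V → ℝ) (ht : Function.Injective t)
    (M K : Set V) (hKM : predSets K ⊆ M)
    (Y : Set V) (hY : Y ⊆ K) :
    Y ⊆ predDecode t K (predEncode t M Y) := by
  intro v hv
  refine ⟨hY hv, fun w hw => ?_⟩
  obtain ⟨z, hz, hmax⟩ := Set.exists_max_image (Y ∩ succSet w) t (Set.toFinite _) ⟨v, hv, hw⟩
  exact ⟨z, ⟨⟨w, hKM (Set.mem_biUnion (hY hv) hw), hz, hmax⟩, hz.2⟩, hmax v ⟨hv, hw⟩⟩
end

section
/- Let (V, ≤) be a finite partially ordered set, t : V → ℝ injective, M ⊆ V, and K ⊆ V with pred(K) ⊆ M. With f and g the pred-encoding and pred-decoding maps defined below, if a subset Y ⊆ K does not satisfy g(f(Y)) ⊆ Y, then Y is pred-exchangeable with respect to K. Consequently, every non-pred-exchangeable subset Y ⊆ K satisfies g(f(Y)) = Y. -/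
/-- For `K ⊆ V` with `pred(K) ⊆ M` and injective processing times:
if `Y ⊆ K` does not satisfy `g(f(Y)) ⊆ Y`, then `Y` is pred-exchangeable with respect
to `K`; consequently every non-pred-exchangeable `Y ⊆ K` satisfies `g(f(Y)) = Y`. -/
theorem predEncode_decode_fixed_point {V : Type*} [Fintype V] [PartialOrder V]
    (t : V → ℝ) (ht : Function.Injective t)
    (M K : Set V) (hKM : predSets K ⊆ M)
    (Y : Set V) (hY : Y ⊆ K) :
    (¬ predDecode t K (predEncode t M Y) ⊆ Y → PredExchangeable t K Y)
    ∧ (¬ PredExchangeable t K Y → predDecode t K (predEncode t M Y) = Y) := by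
  have h1 : ¬ predDecode t K (predEncode t M Y) ⊆ Y → PredExchangeable t K Y := by
    intro h
    obtain ⟨v, ⟨hvK, hv⟩, hvY⟩ := Set.not_subset.mp h
    refine ⟨v, ⟨hvK, hvY⟩, fun w hw => ?_⟩
    obtain ⟨z, ⟨⟨_, _, ⟨hzY, _⟩, _⟩, hzw⟩, hle⟩ := hv w hw
    refine ⟨z, ⟨hzY, hzw⟩, lt_of_le_of_ne hle fun he => hvY ?_⟩
    rw [ht he]
    exact hzY
  refine ⟨h1, fun hn => Set.Subset.antisymm (by_contra fun h => hn (h1 h)) ?_⟩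
  intro v hv
  refine ⟨hY hv, fun w hw => ?_⟩
  have hwM : w ∈ M := hKM (Set.mem_biUnion (hY hv) hw)
  obtain ⟨z, hz, hmax⟩ := Set.exists_max_image (Y ∩ succSet w) t (Set.toFinite _) ⟨v, hv, hw⟩
  exact ⟨z, ⟨⟨w, hwM, hz, hmax⟩, hz.2⟩, hmax v ⟨hv, hw⟩⟩
end

section
/- Let (V, ≤) be a finite partially ordered set, t : V → ℝ injective, M ⊆ V, and K ⊆ V with succ(K) ⊆ M. The map Y ↦ f(Y), where f is the succ-encoding map defined below, is injective on the family of subsets of K that are non-succ-exchangeable with respect to K. -/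
/-- One inclusion: if the encodings agree and `Y` is non-exchangeable, then `Y ⊆ Z`. -/
theorem subset_of_succEncode_eq {V : Type*} [Fintype V] [PartialOrder V]
    (t : V → ℝ) (ht : Function.Injective t)
    (M K : Set V) (hKM : succSets K ⊆ M) (Y Z : Set V) (hYK : Y ⊆ K)
    (hY : ¬ SuccExchangeable t K Y) (h : succEncode t M K Y = succEncode t M K Z) :
    Y ⊆ Z := by
  intro u hu
  by_contra huZ
  apply hY
  refine ⟨u, hu, fun w hw => ?_⟩
  have hwM : w ∈ M := hKM (Set.mem_iUnion₂.2 ⟨u, hYK hu, hw⟩)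
  have hmem : u ∈ (K \ Z) ∩ predSet w := ⟨⟨hYK hu, huZ⟩, hw⟩
  obtain ⟨v, hv, hmin⟩ := Set.exists_min_image ((K \ Z) ∩ predSet w) t
    (Set.toFinite _) ⟨u, hmem⟩
  have hvZ : v ∈ succEncode t M K Z := ⟨w, hwM, hv, hmin⟩
  rw [← h] at hvZ
  obtain ⟨_, _, hvY, _⟩ := hvZ
  refine ⟨v, ⟨⟨hv.1.1, hv.2⟩, hvY.1.2⟩, lt_of_le_of_ne (hmin u hmem) fun e => ?_⟩
  exact hvY.1.2 (ht e ▸ hu)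

/-- For `K ⊆ V` with `succ(K) ⊆ M` and injective processing times, the
succ-encoding map `Y ↦ f(Y)` is injective on the family of subsets of `K` that are
non-succ-exchangeable with respect to `K`. -/
theorem succEncode_injOn_non_exchangeable {V : Type*} [Fintype V] [PartialOrder V]
    (t : V → ℝ) (ht : Function.Injective t)
    (M K : Set V) (hKM : succSets K ⊆ M) :
    Set.InjOn (succEncode t M K) {Y : Set V | Y ⊆ K ∧ ¬ SuccExchangeable t K Y} := by
  rintro Y ⟨hYK, hY⟩ Z ⟨hZK, hZ⟩ h
  exact Set.Subset.antisymm (subset_of_succEncode_eq t ht M K hKM Y Z hYK hY h)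
    (subset_of_succEncode_eq t ht M K hKM Z Y hZK hZ h.symm)
end

section
/- Let n be an even positive integer. Then the function x ↦ 2^x · C(n − x, n/2) is nonincreasing for integers x with 0 ≤ x ≤ n/2; equivalently, for every integer x with 0 ≤ x < n/2, 2^(x+1) · C(n − x − 1, n/2) ≤ 2^x · C(n − x, n/2). -/
/-- For an even positive integer `n`, the function
`x ↦ 2^x · C(n − x, n/2)` is nonincreasing for integers `0 ≤ x ≤ n/2`; equivalently,
for every integer `0 ≤ x < n/2` we have
`2^(x+1) · C(n − x − 1, n/2) ≤ 2^x · C(n − x, n/2)`. -/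
theorem two_pow_mul_choose_antitone (n : ℕ) (hn : 0 < n) (heven : Even n)
    (x : ℕ) (hx : x < n / 2) :
    2 ^ (x + 1) * Nat.choose (n - x - 1) (n / 2) ≤
      2 ^ x * Nat.choose (n - x) (n / 2) := by
  obtain ⟨k, rfl⟩ := heven
  have hk : (k + k) / 2 = k := by omega
  rw [hk] at hx ⊢
  obtain ⟨j, rfl⟩ : ∃ j, k = j + 1 := ⟨k - 1, by omega⟩
  obtain ⟨N, hN⟩ : ∃ N, j + 1 + (j + 1) - x = N + 1 := ⟨j + 1 + (j + 1) - x - 1, by omega⟩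
  rw [hN, Nat.add_sub_cancel, Nat.choose_succ_succ, pow_succ, mul_assoc]
  have h := Nat.choose_succ_right_eq N j
  have h2 : N.choose (j + 1) ≤ N.choose j := by
    refine Nat.le_of_mul_le_mul_right (c := j + 1) ?_ (Nat.succ_pos j)
    rw [h]
    exact Nat.mul_le_mul_left _ (by omega)
  exact Nat.mul_le_mul_left _ (by simp only [Nat.succ_eq_add_one]; omega)
end

section
/- Let V be a finite set with |V| = n, n even, and let W ⊆ V with |W| ≤ n/2. Then the number of subsets X ⊆ V satisfying |W \ X| ≤ max(0, n/2 − |X|) is at most 2^(n − |W|) + Σ_{j=0}^{n/2 − |W|} C(n, j) + (n+1)² · 2^(|W|) · C(n − |W|, n/2). -/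
theorem choose_mono_aux (N k b : ℕ) (hb : b ≤ k) (hk : k ≤ N / 2) :
    N.choose b ≤ N.choose k := by
  induction k, hb using Nat.le_induction with
  | base => exact le_rfl
  | succ k hbk ih =>
    exact (ih (by omega)).trans (Nat.choose_le_succ_of_lt_half_left (by omega))

/-- Let `V` be a finite set with `|V| = n`, `n` even, and `W ⊆ V` with
`|W| ≤ n/2`. Then the number of subsets `X ⊆ V` satisfying
`|W \ X| ≤ max(0, n/2 − |X|)` is at most
`2^(n − |W|) + Σ_{j=0}^{n/2 − |W|} C(n, j) + (n+1)² · 2^(|W|) · C(n − |W|, n/2)`. -/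
theorem count_accepted_sets_le {V : Type*} [Fintype V] [DecidableEq V]
    (n : ℕ) (hn : Fintype.card V = n) (heven : Even n)
    (W : Finset V) (hW : W.card ≤ n / 2) :
    {X : Finset V | ((W \ X).card : ℤ) ≤ max 0 ((n : ℤ) / 2 - (X.card : ℤ))}.ncard ≤
      2 ^ (n - W.card) + ∑ j ∈ Finset.range (n / 2 - W.card + 1), Nat.choose n j
        + (n + 1) ^ 2 * 2 ^ W.card * Nat.choose (n - W.card) (n / 2) := by
  obtain ⟨m, hm⟩ := heven
  have hm2 : n / 2 = m := by omega
  rw [hm2] at hW ⊢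
  have hWc : Wᶜ.card = n - W.card := by rw [Finset.card_compl, hn]
  let B : Finset (Finset V) :=
    (Finset.range (m - W.card + 1)).biUnion fun b => Finset.powersetCard b Wᶜ
  let A1 : Finset (Finset V) := Wᶜ.powerset.image (fun Y => W ∪ Y)
  let A2 : Finset (Finset V) := (W.powerset ×ˢ B).image (fun p => p.1 ∪ p.2)
  have hsub : {X : Finset V | ((W \ X).card : ℤ) ≤ max 0 ((n : ℤ) / 2 - (X.card : ℤ))}
      ⊆ ((A1 ∪ A2 : Finset (Finset V)) : Set (Finset V)) := by
    intro X hX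
    simp only [Set.mem_setOf_eq] at hX
    have hdis : X \ W ⊆ Wᶜ := by
      intro x hx
      simp only [Finset.mem_sdiff] at hx
      simpa using hx.2
    rw [Finset.mem_coe, Finset.mem_union]
    by_cases h0 : (W \ X).card = 0
    · left
      have hs : W ⊆ X := by
        rw [Finset.card_eq_zero] at h0
        exact Finset.sdiff_eq_empty_iff_subset.mp h0
      refine Finset.mem_image.mpr ⟨X \ W, Finset.mem_powerset.mpr hdis, ?_⟩
      exact Finset.union_sdiff_of_subset hs
    · right
      have h1 := Finset.card_sdiff_add_card_inter W X
      have h2 := Finset.card_sdiff_add_card_inter X W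
      rw [Finset.inter_comm X W] at h2
      have h3 : (X \ W).card ≤ m - W.card := by omega
      refine Finset.mem_image.mpr ⟨(X ∩ W, X \ W), ?_, ?_⟩
      · refine Finset.mem_product.mpr ⟨Finset.mem_powerset.mpr Finset.inter_subset_right, ?_⟩
        refine Finset.mem_biUnion.mpr ⟨(X \ W).card, Finset.mem_range.mpr (by omega), ?_⟩
        exact Finset.mem_powersetCard.mpr ⟨hdis, rfl⟩
      · ext x
        simp only [Finset.mem_union, Finset.mem_inter, Finset.mem_sdiff]
        tauto
  have hA1 : A1.card ≤ 2 ^ (n - W.card) := by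
    refine Finset.card_image_le.trans ?_
    rw [Finset.card_powerset, hWc]
  have hB : B.card ≤ (n + 1) * (n - W.card).choose m := by
    refine Finset.card_biUnion_le.trans ?_
    have : ∀ b ∈ Finset.range (m - W.card + 1),
        (Finset.powersetCard b Wᶜ).card ≤ (n - W.card).choose m := by
      intro b hb
      rw [Finset.mem_range] at hb
      rw [Finset.card_powersetCard, hWc]
      have e : (n - W.card).choose m = (n - W.card).choose (m - W.card) :=
        Nat.choose_symm_of_eq_add (by omega)
      rw [e]
      exact choose_mono_aux _ _ _ (by omega) (by omega)
    refine (Finset.sum_le_card_nsmul _ _ _ this).trans ?_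
    rw [Finset.card_range, smul_eq_mul]
    exact Nat.mul_le_mul_right _ (by omega)
  have hA2 : A2.card ≤ (n + 1) ^ 2 * 2 ^ W.card * (n - W.card).choose m := by
    refine Finset.card_image_le.trans ?_
    rw [Finset.card_product, Finset.card_powerset]
    calc 2 ^ W.card * B.card ≤ 2 ^ W.card * ((n + 1) * (n - W.card).choose m) :=
          Nat.mul_le_mul_left _ hB
      _ = (n + 1) * (2 ^ W.card * (n - W.card).choose m) := by ring
      _ ≤ (n + 1) ^ 2 * (2 ^ W.card * (n - W.card).choose m) :=
          Nat.mul_le_mul_right _ (by nlinarith)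
      _ = _ := by ring
  have h := Set.ncard_le_ncard hsub (Finset.finite_toSet _)
  rw [Set.ncard_coe_finset] at h
  have h' := Finset.card_union_le A1 A2
  omega
end
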